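/- arXiv:1703.06279 — 4 statements merged into one kernel-verified Lean document; each statement's English description precedes it below -/
import Mathlib

section
/- (Expurgation lemma.) Let 𝒳 be a finite alphabet, (Θ, w) a probability space, and {P_θ}_{θ∈Θ} a family of probability distributions on 𝒳 such that θ ↦ P_θ(x) is measurable for each x ∈ 𝒳. Define the mixed memoryless source P_{X^n}(x) = ∫_Θ ∏_{i=1}^n P_θ(x_i) dw(θ) for x = (x_1,…,x_n) ∈ 𝒳^n. For each x ∈ 𝒳^n let Θ(x) = { θ ∈ Θ : ∏_{i=1}^n P_θ(x_i) ≤ e^{n^{1/4}} P_{X^n}(x) }, and let Θ*_n = ⋂_{x ∈ 𝒳^n} Θ(x). Then w(Θ*_n) ≥ 1 − (n+1)^{|𝒳|} e^{-n^{1/4}}. -/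
open scoped BigOperators
open MeasureTheory

/-!
Markov's inequality bounds the mass of `{θ | K * ∫ f < f θ}` by `K⁻¹` for each single nonnegative
`f`. In the union bound over all words `x`, the likelihood `θ ↦ ∏ i, P θ (x i)` depends on `x` only
through its type, so there are at most `(n + 1) ^ |𝒳|` *distinct* functions to which Markov's
inequality has to be applied.
-/

section Types

variable {ι α : Type*} [Fintype ι]

open scoped Classical in
/-- The (unnormalised) type of a word `x : ι → α`: the number of occurrences of each letter. The
values are taken in `Fin (Fintype.card ι + 1)` so that there are only finitely many types. -/
noncomputable def wordType (x : ι → α) (a : α) : Fin (Fintype.card ι + 1) :=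
  ⟨Fintype.card {i // x i = a}, Nat.lt_succ_of_le (Fintype.card_subtype_le _)⟩

variable [Fintype α] {M : Type*} [CommMonoid M]

theorem prod_comp_eq_prod_pow_wordType (p : α → M) (x : ι → α) :
    ∏ i, p (x i) = ∏ a, p a ^ (wordType x a : ℕ) := by
  classical
  simp only [wordType, Fintype.card_subtype, ← Finset.prod_const]
  exact (Finset.prod_fiberwise' Finset.univ x p).symm

theorem ncard_range_prod_comp_le {Θ : Type*} (P : Θ → α → M) :
    (Set.range fun (x : ι → α) θ => ∏ i, P θ (x i)).ncard ≤
      (Fintype.card ι + 1) ^ Fintype.card α := by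
  let typeLikelihood (t : α → Fin (Fintype.card ι + 1)) (θ : Θ) : M := ∏ a, P θ a ^ (t a : ℕ)
  have range_subset : (Set.range fun (x : ι → α) θ => ∏ i, P θ (x i)) ⊆
      Set.range typeLikelihood := by
    rintro _ ⟨x, rfl⟩
    exact ⟨wordType x, funext fun θ => (prod_comp_eq_prod_pow_wordType (P θ) x).symm⟩
  calc (Set.range fun (x : ι → α) θ => ∏ i, P θ (x i)).ncard
      ≤ (Set.range typeLikelihood).ncard := Set.ncard_le_ncard range_subset
    _ ≤ Nat.card (α → Fin (Fintype.card ι + 1)) := Finite.card_range_le typeLikelihood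
    _ = (Fintype.card ι + 1) ^ Fintype.card α := by simp [Nat.card_fun]

end Types

section Markov

variable {Θ : Type*} [MeasurableSpace Θ] {μ : Measure Θ} {K : ℝ}

theorem measureReal_mul_integral_lt_le_inv {f : Θ → ℝ} (hf : 0 ≤ᵐ[μ] f) (hint : Integrable f μ)
    (hK : 0 < K) : μ.real {θ | K * ∫ θ', f θ' ∂μ < f θ} ≤ K⁻¹ := by
  obtain integral_zero | integral_pos := (integral_nonneg_of_ae hf).eq_or_lt
  · have ae_zero : f =ᵐ[μ] 0 := (integral_eq_zero_iff_of_nonneg_ae hf hint).1 integral_zero.symm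
    have null : μ {θ | K * ∫ θ', f θ' ∂μ < f θ} = 0 := by
      refine measure_mono_null (fun θ hθ => ?_) ae_zero
      simpa [← integral_zero] using ne_of_gt (Set.mem_ofPred.1 hθ)
    simpa [measureReal_def, null] using hK.le
  · have threshold_pos : 0 < K * ∫ θ, f θ ∂μ := mul_pos hK integral_pos
    calc μ.real {θ | K * ∫ θ', f θ' ∂μ < f θ}
        ≤ μ.real {θ | K * ∫ θ', f θ' ∂μ ≤ f θ} :=
          measureReal_mono (fun θ hθ => le_of_lt (Set.mem_ofPred.1 hθ))
            (hint.measure_ge_lt_top threshold_pos).ne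
      _ ≤ (∫ θ, f θ ∂μ) / (K * ∫ θ, f θ ∂μ) :=
          (le_div_iff₀' threshold_pos).2 (mul_meas_ge_le_integral_of_nonneg hf hint _)
      _ = K⁻¹ := by field_simp

theorem measureReal_univ_sub_ncard_range_mul_inv_le [IsFiniteMeasure μ] {κ : Type*}
    {f : κ → Θ → ℝ} (hfin : (Set.range f).Finite) (hf : ∀ k, 0 ≤ᵐ[μ] f k)
    (hint : ∀ k, Integrable (f k) μ) (hK : 0 < K) :
    μ.real Set.univ - (Set.range f).ncard * K⁻¹ ≤
      μ.real {θ | ∀ k, f k θ ≤ K * ∫ θ', f k θ' ∂μ} := by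
  set good := {θ | ∀ k, f k θ ≤ K * ∫ θ', f k θ' ∂μ}
  let bad (g : Θ → ℝ) : Set Θ := {θ | K * ∫ θ', g θ' ∂μ < g θ}
  have cover : Set.univ ⊆ good ∪ ⋃ g ∈ hfin.toFinset, bad g := by
    intro θ _
    by_cases hθ : θ ∈ good
    · exact .inl hθ
    · obtain ⟨k, hk⟩ : ∃ k, K * ∫ θ', f k θ' ∂μ < f k θ := by simpa [good] using hθ
      exact .inr (Set.mem_biUnion (hfin.mem_toFinset.2 ⟨k, rfl⟩) hk)
  have bad_le : ∀ g ∈ hfin.toFinset, μ.real (bad g) ≤ K⁻¹ := by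
    simpa using fun k => measureReal_mul_integral_lt_le_inv (hf k) (hint k) hK
  rw [sub_le_iff_le_add]
  calc μ.real Set.univ
      ≤ μ.real good + μ.real (⋃ g ∈ hfin.toFinset, bad g) :=
        (measureReal_mono cover).trans (measureReal_union_le _ _)
    _ ≤ μ.real good + ∑ g ∈ hfin.toFinset, μ.real (bad g) := by
        gcongr
        exact measureReal_biUnion_finset_le _ _
    _ ≤ μ.real good + (Set.range f).ncard * K⁻¹ := by
        gcongr
        simpa [Set.ncard_eq_toFinset_card _ hfin] using Finset.sum_le_card_nsmul _ _ _ bad_le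

end Markov

section Source

variable {ι α Θ : Type*} [Fintype ι] [Fintype α] [MeasurableSpace Θ] {w : Measure Θ}
  [IsFiniteMeasure w] {P : Θ → α → ℝ}

theorem integrable_prod_comp_of_mem_stdSimplex (hmeas : ∀ a, AEMeasurable (P · a) w)
    (hP : ∀ᵐ θ ∂w, P θ ∈ stdSimplex ℝ α) (x : ι → α) :
    Integrable (fun θ => ∏ i, P θ (x i)) w := by
  refine .of_mem_Icc 0 1 (Finset.aemeasurable_fun_prod _ fun i _ => hmeas (x i)) ?_
  filter_upwards [hP] with θ hθ
  exact ⟨Finset.prod_nonneg fun i _ => hθ.1 (x i),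
    Finset.prod_le_one (fun i _ => hθ.1 (x i)) fun i _ => (mem_Icc_of_mem_stdSimplex hθ _).2⟩

theorem stmt_4_general (hP : ∀ᵐ θ ∂w, ∀ a, 0 ≤ P θ a)
    (hint : ∀ x : ι → α, Integrable (fun θ => ∏ i, P θ (x i)) w) {K : ℝ} (hK : 0 < K) :
    w.real Set.univ - ((Fintype.card ι : ℝ) + 1) ^ Fintype.card α * K⁻¹ ≤
      w.real {θ | ∀ x : ι → α, ∏ i, P θ (x i) ≤ K * ∫ θ', ∏ i, P θ' (x i) ∂w} := by
  have likelihood_nonneg (x : ι → α) : 0 ≤ᵐ[w] fun θ => ∏ i, P θ (x i) :=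
    hP.mono fun θ hθ => Finset.prod_nonneg fun i _ => hθ (x i)
  refine le_trans ?_ (measureReal_univ_sub_ncard_range_mul_inv_le (Set.finite_range _)
    likelihood_nonneg hint hK)
  gcongr
  exact_mod_cast ncard_range_prod_comp_le P

end Source

/-- **Expurgation lemma:** for the mixed memoryless source
`P_{X^n}(x) = ∫_Θ ∏ᵢ P_θ(xᵢ) dw(θ)`, the set
`Θ*_n = { θ : ∏ᵢ P_θ(xᵢ) ≤ e^{n^{1/4}} P_{X^n}(x) for all x }` satisfies
`w(Θ*_n) ≥ 1 − (n+1)^{|𝒳|} e^{−n^{1/4}}`. -/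
theorem stmt_4 {𝒳 Θ : Type*} [Fintype 𝒳] [MeasurableSpace Θ]
    (w : Measure Θ) [IsProbabilityMeasure w]
    (P : Θ → 𝒳 → ℝ)
    (hmeas : ∀ x : 𝒳, Measurable fun θ => P θ x)
    (hdist : ∀ θ, (∀ x, 0 ≤ P θ x) ∧ (∑ x, P θ x) = 1)
    (n : ℕ) (hn : 0 < n)
    (PX : (Fin n → 𝒳) → ℝ)
    (hPX : ∀ x : Fin n → 𝒳, PX x = ∫ θ, (∏ i, P θ (x i)) ∂w) :
    1 - ((n : ℝ) + 1) ^ (Fintype.card 𝒳) * Real.exp (-((n : ℝ) ^ ((1 : ℝ) / 4))) ≤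
      (w {θ | ∀ x : Fin n → 𝒳,
        (∏ i, P θ (x i)) ≤ Real.exp ((n : ℝ) ^ ((1 : ℝ) / 4)) * PX x}).toReal := by
  have hint := integrable_prod_comp_of_mem_stdSimplex (ι := Fin n)
    (fun a => (hmeas a).aemeasurable) (ae_of_all w hdist)
  simpa [hPX, Real.exp_neg, measureReal_def] using
    stmt_4_general (ae_of_all w fun θ => (hdist θ).1) hint (Real.exp_pos ((n : ℝ) ^ ((1 : ℝ) / 4)))
end

section
/- (Upper decomposition lemma.) Let 𝒳 be a finite alphabet, (Θ, w) a probability space, {P_θ} a measurable family of distributions on 𝒳, and P_{X^n}(x) = ∫_Θ ∏_{i=1}^n P_θ(x_i) dw(θ) the mixed memoryless source. Let X̄ = {X̄^n} be an arbitrary general source with P_{X̄^n}(x) > 0 for all x ∈ 𝒳^n. Let Θ*_n = { θ : ∏_{i=1}^n P_θ(x_i) ≤ e^{n^{1/4}} P_{X^n}(x) for every x ∈ 𝒳^n }. Then for every θ ∈ Θ*_n and every real number z_n: Pr{ (1/n) log( P_{X^n}(X_θ^n) / P_{X̄^n}(X_θ^n) ) ≤ z_n } ≤ Pr{ (1/n)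 log( P_{X_θ^n}(X_θ^n) / P_{X̄^n}(X_θ^n) ) ≤ z_n + n^{-3/4} }, where both probabilities are taken under the i.i.d. distribution P_{X_θ^n}(x) = ∏_{i=1}^n P_θ(x_i) on 𝒳^n. -/
open scoped BigOperators
open MeasureTheory

/-- Probability of a set `A` under a distribution `P` on a finite type. -/
noncomputable def prob {α : Type*} [Fintype α] (P : α → ℝ) (A : Set α) : ℝ :=
  ∑ x, A.indicator P x

/-!
On the support of `p`, the bound `p ≤ e ^ γ * q` puts `log (p / r)` at most `γ` above `log (q / r)`,
so up to a `p`-null set the event for `q` at level `z` is contained in the event for `p` at the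
shifted level. For `γ = n ^ (1 / 4)`, the normalization `1 / n` turns the shift into `n ^ (-3 / 4)`.
-/

theorem prob_le_prob_of_forall_pos {α : Type*} [Fintype α] {P : α → ℝ} (hP : ∀ x, 0 ≤ P x)
    {A B : Set α} (hAB : ∀ x ∈ A, 0 < P x → x ∈ B) : prob P A ≤ prob P B := by
  refine Finset.sum_le_sum fun x _ => Set.indicator_apply_le' (fun hxA => ?_)
    fun _ => Set.indicator_nonneg (fun y _ => hP y) x
  rcases (hP x).eq_or_lt with hzero | hpos
  · exact hzero.symm.trans_le (Set.indicator_nonneg (fun y _ => hP y) x)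
  · rw [Set.indicator_of_mem (hAB x hxA hpos)]

theorem log_div_le_add_log_div_of_le_exp_mul {a b r γ : ℝ} (ha : 0 < a) (hr : 0 < r)
    (hab : a ≤ Real.exp γ * b) : Real.log (a / r) ≤ γ + Real.log (b / r) := by
  have hb : 0 < b := pos_of_mul_pos_right (ha.trans_le hab) (Real.exp_pos γ).le
  calc Real.log (a / r) ≤ Real.log (Real.exp γ * (b / r)) := by
        rw [← mul_div_assoc]
        gcongr
    _ = γ + Real.log (b / r) := by
        rw [Real.log_mul (Real.exp_ne_zero γ) (div_pos hb hr).ne', Real.log_exp]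

theorem one_div_mul_rpow_one_sub {x : ℝ} (hx : 0 < x) (s : ℝ) :
    1 / x * x ^ (1 - s) = (x ^ s)⁻¹ := by
  rw [Real.rpow_sub hx, Real.rpow_one]
  field_simp

theorem stmt_5_general {α : Type*} [Fintype α] {p q r : α → ℝ} {c γ : ℝ}
    (hp : ∀ x, 0 ≤ p x) (hr : ∀ x, 0 < r x) (hc : 0 ≤ c)
    (hpq : ∀ x, p x ≤ Real.exp γ * q x) (z : ℝ) :
    prob p {x | c * Real.log (q x / r x) ≤ z} ≤
      prob p {x | c * Real.log (p x / r x) ≤ z + c * γ} := by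
  refine prob_le_prob_of_forall_pos hp fun x (hx : c * Real.log (q x / r x) ≤ z) hpos => ?_
  calc c * Real.log (p x / r x) ≤ c * (γ + Real.log (q x / r x)) :=
        mul_le_mul_of_nonneg_left (log_div_le_add_log_div_of_le_exp_mul hpos (hr x) (hpq x)) hc
    _ ≤ z + c * γ := by linarith

/-- **Upper decomposition lemma:** for every `θ` in the expurgated set `Θ*_n` and
every real `z_n`,
`Pr{(1/n) log (P_{X^n}(X_θ^n)/P_{X̄^n}(X_θ^n)) ≤ z_n}
  ≤ Pr{(1/n) log (P_{X_θ^n}(X_θ^n)/P_{X̄^n}(X_θ^n)) ≤ z_n + n^{-3/4}}`,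
both probabilities being taken under the i.i.d. distribution `P_{X_θ^n}`. -/
theorem stmt_5 {𝒳 Θ : Type*} [Fintype 𝒳] [MeasurableSpace Θ]
    (w : Measure Θ) [IsProbabilityMeasure w]
    (P : Θ → 𝒳 → ℝ)
    (hmeas : ∀ x : 𝒳, Measurable fun θ => P θ x)
    (hdist : ∀ θ, (∀ x, 0 ≤ P θ x) ∧ (∑ x, P θ x) = 1)
    (n : ℕ) (hn : 0 < n)
    (PX : (Fin n → 𝒳) → ℝ)
    (hPX : ∀ x : Fin n → 𝒳, PX x = ∫ θ, (∏ i, P θ (x i)) ∂w)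
    (Pbar : (Fin n → 𝒳) → ℝ)
    (hPbar0 : ∀ x, 0 < Pbar x) (hPbar1 : ∑ x, Pbar x = 1)
    (θ : Θ)
    (hθ : ∀ x : Fin n → 𝒳,
      (∏ i, P θ (x i)) ≤ Real.exp ((n : ℝ) ^ ((1 : ℝ) / 4)) * PX x)
    (z : ℝ) :
    prob (fun x : Fin n → 𝒳 => ∏ i, P θ (x i))
        {x | (1 / (n : ℝ)) * Real.log (PX x / Pbar x) ≤ z} ≤
      prob (fun x : Fin n → 𝒳 => ∏ i, P θ (x i))
        {x | (1 / (n : ℝ)) * Real.log ((∏ i, P θ (x i)) / Pbar x)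
          ≤ z + ((n : ℝ) ^ ((3 : ℝ) / 4))⁻¹} := by
  rw [← one_div_mul_rpow_one_sub (Nat.cast_pos.mpr hn), show (1 : ℝ) - 3 / 4 = 1 / 4 by norm_num]
  exact stmt_5_general (fun x => Finset.prod_nonneg fun i _ => (hdist θ).1 (x i)) hPbar0
    (by positivity) hθ z
end

section
/- (Lower decomposition lemma.) Let 𝒳 be a finite alphabet, (Θ, w) a probability space, {P_θ} a measurable family of distributions on 𝒳, and P_{X^n}(x) = ∫_Θ ∏_{i=1}^n P_θ(x_i) dw(θ) the mixed memoryless source. Let X̄ = {X̄^n} be an arbitrary general source with P_{X̄^n}(x) > 0 for all x ∈ 𝒳^n. Then for every θ ∈ Θ, every real number z_n, and every γ > 0: Pr{ (1/n) log( P_{X^n}(X_θ^n) / P_{X̄^n}(X_θ^n) ) ≤ z_n } ≥ Pr{ (1/n) log( P_{X_θ^n}(X_θ^n) / P_{X̄^n}(X_θ^n) ) ≤ z_n − γ/√n } − e^{−√n γ}, where both probabilities are taken under the i.i.d. distribution P_{X_θ^n}(x) = ∏_{i=1}^n P_θ(x_i) on 𝒳^n. -/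
open scoped BigOperators
open MeasureTheory

/-!
Let `P = P_{X_θ^n}`, `Q = P_{X^n}`, `R = P_{X̄^n}`. If `log (P x / R x) ≤ n z - √n γ` but
`log (Q x / R x) > n z`, then `P x ≤ e^{-√n γ} e^{n z} R x < e^{-√n γ} Q x`. Summing over all such
`x` bounds their probability under `P` by `e^{-√n γ}`, because `Q` has total mass one.

The step `e^{n z} R x < Q x` is false for `Q x = 0`, where `Real.log (Q x / R x)` is `0` rather than
`-∞`. This can only happen for `z < 0`, and then `e^{n z} R x ≤ R x` lets `R` take the place of `Q`
in the summation.
-/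

section Simplex

lemma prod_mem_stdSimplex {ι : Type*} [Fintype ι] [DecidableEq ι] {κ : ι → Type*}
    [∀ i, Fintype (κ i)] {p : ∀ i, κ i → ℝ} (hp : ∀ i, p i ∈ stdSimplex ℝ (κ i)) :
    (fun x : ∀ i, κ i => ∏ i, p i (x i)) ∈ stdSimplex ℝ (∀ i, κ i) := by
  refine ⟨fun x => Finset.prod_nonneg fun i _ => (hp i).1 (x i), ?_⟩
  rw [← Fintype.prod_sum]
  exact Finset.prod_eq_one fun i _ => (hp i).2

lemma integral_mem_stdSimplex {Θ α : Type*} [MeasurableSpace Θ] [Fintype α] {w : Measure Θ}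
    [IsProbabilityMeasure w] {F : Θ → α → ℝ} (hF_meas : AEStronglyMeasurable F w)
    (hF : ∀ᵐ θ ∂w, F θ ∈ stdSimplex ℝ α) :
    (fun x => ∫ θ, F θ x ∂w) ∈ stdSimplex ℝ α := by
  obtain ⟨C, hC⟩ := (bounded_stdSimplex α).exists_norm_le
  have hF_int : Integrable F w := .of_bound hF_meas C (hF.mono fun θ hθ => hC _ hθ)
  have h_mem : ∫ θ, F θ ∂w ∈ stdSimplex ℝ α :=
    (convex_stdSimplex ℝ α).integral_mem (isClosed_stdSimplex ℝ α) hF hF_int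
  convert h_mem using 1
  exact funext fun x => (eval_integral hF_int.eval x).symm

lemma integral_prod_mem_stdSimplex {Θ 𝒳 ι : Type*} [MeasurableSpace Θ] [Fintype 𝒳] [Fintype ι]
    [DecidableEq ι] {w : Measure Θ} [IsProbabilityMeasure w] {P : Θ → 𝒳 → ℝ}
    (hP_meas : ∀ x, Measurable fun θ => P θ x) (hP : ∀ θ, P θ ∈ stdSimplex ℝ 𝒳) :
    (fun x : ι → 𝒳 => ∫ θ, ∏ i, P θ (x i) ∂w) ∈ stdSimplex ℝ (ι → 𝒳) := by
  have h_meas : Measurable fun θ (x : ι → 𝒳) => ∏ i, P θ (x i) := by fun_prop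
  exact integral_mem_stdSimplex h_meas.aestronglyMeasurable
    (.of_forall fun θ => prod_mem_stdSimplex fun _ => hP θ)

end Simplex

section MeasureChange

variable {α : Type*} [Fintype α] {P Q : α → ℝ} {A B : Set α} {c : ℝ}

lemma prob_le_prob_add_prob_diff (hP : ∀ x, 0 ≤ P x) :
    prob P A ≤ prob P B + prob P (A \ B) := by
  rw [prob, prob, prob, ← Finset.sum_add_distrib]
  refine Finset.sum_le_sum fun x _ => ?_
  by_cases hA : x ∈ A <;> by_cases hB : x ∈ B <;> simp [hA, hB, hP x]

lemma prob_le_of_le_mul (hc : 0 ≤ c) (hQ : ∀ x, 0 ≤ Q x) (hQ_sum : ∑ x, Q x ≤ 1)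
    (h : ∀ x ∈ A, P x ≤ c * Q x) : prob P A ≤ c :=
  calc prob P A ≤ ∑ x, c * Q x :=
        Finset.sum_le_sum fun x _ => Set.indicator_le' h (fun x _ => mul_nonneg hc (hQ x)) x
    _ = c * ∑ x, Q x := (Finset.mul_sum ..).symm
    _ ≤ c := mul_le_of_le_one_right hc hQ_sum

end MeasureChange

section LogRatio

variable {p q r a : ℝ}

lemma le_exp_mul_of_log_div_le (hr : 0 < r) (h : Real.log (p / r) ≤ a) :
    p ≤ Real.exp a * r :=
  (div_le_iff₀ hr).1 <| (Real.le_exp_log _).trans (Real.exp_le_exp.2 h)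

lemma exp_mul_lt_of_lt_log_div (hq : 0 ≤ q) (hr : 0 < r) (ha : 0 ≤ a)
    (h : a < Real.log (q / r)) : Real.exp a * r < q := by
  have hq_ne : q ≠ 0 := by
    rintro rfl
    simp [ha.not_gt] at h
  exact (lt_div_iff₀ hr).1 <|
    (Real.lt_log_iff_exp_lt (div_pos (hq.lt_of_ne' hq_ne) hr)).1 h

lemma mul_div_sqrt_eq_sqrt_mul (t γ : ℝ) : t * (γ / √t) = √t * γ := by
  rw [← mul_div_assoc, mul_div_right_comm, Real.div_sqrt]

variable {α : Type*} [Fintype α] {P Q R : α → ℝ}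

theorem prob_log_div_le_sub_le_add_exp_neg (hP : ∀ x, 0 ≤ P x)
    (hQ : ∀ x, 0 ≤ Q x) (hQ_sum : ∑ x, Q x ≤ 1) (hR : ∀ x, 0 < R x) (hR_sum : ∑ x, R x ≤ 1)
    (a c : ℝ) :
    prob P {x | Real.log (P x / R x) ≤ a - c} ≤
      prob P {x | Real.log (Q x / R x) ≤ a} + Real.exp (-c) := by
  refine (prob_le_prob_add_prob_diff hP).trans (add_le_add_right ?_ _)
  have hP_le : ∀ x, Real.log (P x / R x) ≤ a - c → P x ≤ Real.exp (-c) * (Real.exp a * R x) := by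
    intro x hx
    rw [← mul_assoc, ← Real.exp_add, neg_add_eq_sub]
    exact le_exp_mul_of_log_div_le (hR x) hx
  rcases lt_or_ge a 0 with ha | ha
  · refine prob_le_of_le_mul (Real.exp_nonneg _) (fun x => (hR x).le) hR_sum fun x hx => ?_
    have hR_le : Real.exp a * R x ≤ R x :=
      mul_le_of_le_one_left (hR x).le (Real.exp_le_one_iff.2 ha.le)
    exact (hP_le x hx.1).trans (by gcongr)
  · refine prob_le_of_le_mul (Real.exp_nonneg _) hQ hQ_sum fun x hx => ?_
    have hQ_gt : Real.exp a * R x < Q x :=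
      exp_mul_lt_of_lt_log_div (hQ x) (hR x) ha (not_le.1 hx.2)
    exact (hP_le x hx.1).trans (by gcongr)

theorem stmt_6_general (hP : ∀ x, 0 ≤ P x)
    (hQ : ∀ x, 0 ≤ Q x) (hQ_sum : ∑ x, Q x ≤ 1) (hR : ∀ x, 0 < R x) (hR_sum : ∑ x, R x ≤ 1)
    {t : ℝ} (ht : 0 < t) (z γ : ℝ) :
    prob P {x | 1 / t * Real.log (Q x / R x) ≤ z} ≥
      prob P {x | 1 / t * Real.log (P x / R x) ≤ z - γ / √t} - Real.exp (-(√t * γ)) := by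
  simp only [one_div, inv_mul_le_iff₀ ht, mul_sub, mul_div_sqrt_eq_sqrt_mul]
  exact sub_le_iff_le_add.2 <|
    prob_log_div_le_sub_le_add_exp_neg hP hQ hQ_sum hR hR_sum (t * z) (√t * γ)

end LogRatio

/-- **Lower decomposition lemma:** for every `θ ∈ Θ`, real `z_n` and `γ > 0`,
`Pr{(1/n) log (P_{X^n}(X_θ^n)/P_{X̄^n}(X_θ^n)) ≤ z_n}
  ≥ Pr{(1/n) log (P_{X_θ^n}(X_θ^n)/P_{X̄^n}(X_θ^n)) ≤ z_n − γ/√n} − e^{−√n γ}`,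
both probabilities being taken under the i.i.d. distribution `P_{X_θ^n}`. -/
theorem stmt_6 {𝒳 Θ : Type*} [Fintype 𝒳] [MeasurableSpace Θ]
    (w : Measure Θ) [IsProbabilityMeasure w]
    (P : Θ → 𝒳 → ℝ)
    (hmeas : ∀ x : 𝒳, Measurable fun θ => P θ x)
    (hdist : ∀ θ, (∀ x, 0 ≤ P θ x) ∧ (∑ x, P θ x) = 1)
    (n : ℕ) (hn : 0 < n)
    (PX : (Fin n → 𝒳) → ℝ)
    (hPX : ∀ x : Fin n → 𝒳, PX x = ∫ θ, (∏ i, P θ (x i)) ∂w)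
    (Pbar : (Fin n → 𝒳) → ℝ)
    (hPbar0 : ∀ x, 0 < Pbar x) (hPbar1 : ∑ x, Pbar x = 1)
    (θ : Θ) (z γ : ℝ) (hγ : 0 < γ) :
    prob (fun x : Fin n → 𝒳 => ∏ i, P θ (x i))
        {x | (1 / (n : ℝ)) * Real.log (PX x / Pbar x) ≤ z} ≥
      prob (fun x : Fin n → 𝒳 => ∏ i, P θ (x i))
        {x | (1 / (n : ℝ)) * Real.log ((∏ i, P θ (x i)) / Pbar x)
          ≤ z - γ / Real.sqrt (n : ℝ)} - Real.exp (-(Real.sqrt (n : ℝ) * γ)) := by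
  have hPX_mem : PX ∈ stdSimplex ℝ (Fin n → 𝒳) :=
    funext hPX ▸ integral_prod_mem_stdSimplex hmeas hdist
  exact stmt_6_general (prod_mem_stdSimplex fun _ => hdist θ).1 hPX_mem.1 hPX_mem.2.le
    hPbar0 hPbar1.le (Nat.cast_pos.2 hn) z γ
end

section
/- Let 𝒳 be a finite alphabet, (Θ, w) a probability space, {P_θ} a measurable family of distributions on 𝒳, P_{X^n}(x) = ∫_Θ ∏_{i=1}^n P_θ(x_i) dw(θ) the mixed memoryless source, and P_{X̄^n}(x) = ∏_{i=1}^n P_{X̄}(x_i) a stationary memoryless alternative with P_{X̄}(x) > 0 for all x. For θ ∈ Θ set D_θ = D(P_θ‖P_{X̄}) and V_θ = Σ_x P_θ(x)( log(P_θ(x)/P_{X̄}(x)) − D_θ )², assume V_θ > 0 for all θ, and let Φ_θ(S) = G(S/√V_θ) with G the standard normal CDF. Then for all R, S ∈ ℝ: limsup_{n→∞} Pr{ (1/n) log( P_{X^n}(X^n)/P_{X̄^n}(X^n) ) ≤ R + S/√n } ≤ w({θ : D_θ < R}) + ∫_{{θ : D_θ = R}} Φ_θ(S) dw(θ), where the probability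 on the left is taken under P_{X^n}. -/
open scoped BigOperators
open MeasureTheory

/-- Kullback–Leibler divergence `D(P‖Q) = ∑_x P(x) log (P(x)/Q(x))` on a finite alphabet. -/
noncomputable def KL {𝒳 : Type*} [Fintype 𝒳] (P Q : 𝒳 → ℝ) : ℝ :=
  ∑ x, P x * Real.log (P x / Q x)

/-- The variance of the divergence density,
`V(P,Q) = ∑_x P(x) (log (P(x)/Q(x)) − D(P‖Q))²`. -/
noncomputable def Vdiv {𝒳 : Type*} [Fintype 𝒳] (P Q : 𝒳 → ℝ) : ℝ :=
  ∑ x, P x * (Real.log (P x / Q x) - KL P Q) ^ 2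

/-- The standard normal cumulative distribution function
`G(x) = (1/√(2π)) ∫_{-∞}^x e^{-u²/2} du`. -/
noncomputable def stdGauss (x : ℝ) : ℝ :=
  ∫ u in Set.Iic x, Real.exp (-u ^ 2 / 2) / Real.sqrt (2 * Real.pi)

/-!
A component `P_θ` whose `n`-letter likelihood exceeds `e^T` times that of the mixture on some word
is rare: likelihoods depend on a word only through its type, so Markov's inequality and a union
bound over the types give such `θ` total weight at most `(n + 1) ^ |𝒳| e^{-T}`. For every other `θ`
the mixture's log-likelihood ratio is at least the component's minus `T`. With `T = n^{1/4}` the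
exceptional weight vanishes, while the shift is `o(√n)` and so invisible to the central limit
theorem for the component's ratio: its probability of staying below `nR + S√n + T` tends to
`Φ_θ(S)` if `D_θ = R` and to `0` if `D_θ > R`. Bounding the components with `D_θ < R` by `1` and
integrating by dominated convergence yields the bound.
-/

open ProbabilityTheory Filter Topology
open scoped NNReal

lemma stdGauss_eq_cdf : stdGauss = cdf (gaussianReal 0 1) := by
  ext t
  rw [cdf_eq_real, Measure.real, gaussianReal_apply_eq_integral _ one_ne_zero,
    ENNReal.toReal_ofReal (integral_nonneg fun x => gaussianPDFReal_nonneg _ _ _)]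
  refine integral_congr_ae (ae_of_all _ fun u => ?_)
  simp [gaussianPDFReal, div_eq_inv_mul]

lemma gaussianReal_real_Iic {v : ℝ≥0} (hv : v ≠ 0) (t : ℝ) :
    (gaussianReal 0 v).real (Set.Iic t) = stdGauss (t / √v) := by
  have hsqrt : 0 < √(v : ℝ) := Real.sqrt_pos.2 (by exact_mod_cast pos_iff_ne_zero.2 hv)
  have hscale : gaussianReal 0 v = (gaussianReal 0 1).map (√(v : ℝ) * ·) := by
    rw [gaussianReal_map_const_mul]
    congr 1
    · simp
    · ext; simp
  rw [stdGauss_eq_cdf, cdf_eq_real, hscale,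
    map_measureReal_apply (by fun_prop) measurableSet_Iic]
  congr 1
  ext x
  simp [le_div_iff₀' hsqrt]

section ConvergenceInDistribution

variable {ι Ω Ω' : Type*} {l : Filter ι} [MeasurableSpace Ω] [MeasurableSpace Ω']
  {μ : Measure Ω} [IsProbabilityMeasure μ] {ν : Measure Ω'} [IsProbabilityMeasure ν]
  {X : ι → Ω → ℝ} {Z : Ω' → ℝ} {t : ι → ℝ}

lemma tendsto_measureReal_le_const_of_tendstoInDistribution {c : ℝ}
    (hX : TendstoInDistribution X l Z (fun _ => μ) ν) (hc : ν {ω | Z ω = c} = 0) :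
    Tendsto (fun i => μ.real {ω | X i ω ≤ c}) l (𝓝 (ν.real {ω | Z ω ≤ c})) := by
  have hfrontier : ν.map Z (frontier (Set.Iic c)) = 0 := by
    rw [frontier_Iic, Measure.map_apply_of_aemeasurable hX.aemeasurable_limit
      (measurableSet_singleton c)]
    exact hc
  have hlim : Tendsto (fun i => μ.map (X i) (Set.Iic c)) l (𝓝 (ν.map Z (Set.Iic c))) :=
    ProbabilityMeasure.tendsto_measure_of_null_frontier_of_tendsto' hX.tendsto hfrontier
  simp only [Measure.map_apply_of_aemeasurable (hX.forall_aemeasurable _) measurableSet_Iic,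
    Measure.map_apply_of_aemeasurable hX.aemeasurable_limit measurableSet_Iic] at hlim
  exact (ENNReal.tendsto_toReal (measure_ne_top _ _)).comp hlim

lemma tendsto_measureReal_le_of_tendstoInDistribution [l.IsCountablyGenerated] {c : ℝ}
    (hX : TendstoInDistribution X l Z (fun _ => μ) ν) (ht : Tendsto t l (𝓝 c))
    (hc : ν {ω | Z ω = c} = 0) :
    Tendsto (fun i => μ.real {ω | X i ω ≤ t i}) l (𝓝 (ν.real {ω | Z ω ≤ c})) := by
  have hneg : TendstoInMeasure μ (fun i _ => -t i) l (fun _ => -c) :=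
    fun ε hε => tendsto_const_nhds.congr' <| by
      filter_upwards [(EMetric.tendsto_nhds.1 ht.neg) ε hε] with i hi
      simp only [hi.not_ge, Set.ofPred_false, measure_empty]
  have hshift := hX.add_of_tendstoInMeasure_const hneg fun _ => aemeasurable_const
  simpa only [Pi.add_apply, ← sub_eq_add_neg, sub_nonpos] using
    tendsto_measureReal_le_const_of_tendstoInDistribution hshift (c := 0)
      (by simpa only [← sub_eq_add_neg, sub_eq_zero] using hc)

lemma tendsto_measureReal_le_zero_of_tendstoInDistribution
    (hX : TendstoInDistribution X l Z (fun _ => μ) ν) (ht : Tendsto t l atBot) :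
    Tendsto (fun i => μ.real {ω | X i ω ≤ t i}) l (𝓝 0) := by
  refine (ENNReal.tendsto_toReal ENNReal.zero_ne_top).comp
    (ENNReal.tendsto_nhds_zero.2 fun ε hε => ?_)
  obtain ⟨M, hM⟩ : ∃ M, ν.map Z (Set.Iic M) < ε := by
    have := Measure.isProbabilityMeasure_map hX.aemeasurable_limit
    have htail : Tendsto (fun M => ν.map Z (Set.Iic M)) atBot (𝓝 0) := by
      simpa only [ofReal_cdf, ENNReal.ofReal_zero] using
        ENNReal.tendsto_ofReal (tendsto_cdf_atBot (ν.map Z))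
    exact (htail.eventually_lt_const hε).exists
  have hlimsup := ProbabilityMeasure.limsup_measure_closed_le_of_tendsto hX.tendsto
    (isClosed_Iic (a := M))
  filter_upwards [eventually_lt_of_limsup_lt (hlimsup.trans_lt hM), ht.eventually_le_atBot M]
    with i hi hti
  refine le_trans ?_ hi.le
  change _ ≤ μ.map (X i) (Set.Iic M)
  rw [Measure.map_apply_of_aemeasurable (hX.forall_aemeasurable i) measurableSet_Iic]
  exact measure_mono fun ω hω => le_trans hω hti

end ConvergenceInDistribution

lemma tendstoInDistribution_sum_infinitePi {E : Type*} [MeasurableSpace E] (μ : Measure E)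
    [IsProbabilityMeasure μ] {f : E → ℝ} (hf : Measurable f) (hf2 : MemLp f 2 μ) :
    TendstoInDistribution
      (fun (n : ℕ) (ω : ℕ → E) => (√n)⁻¹ * (∑ k ∈ Finset.range n, f (ω k) - n * μ[f])) atTop id
      (fun _ => Measure.infinitePi fun _ : ℕ => μ) (gaussianReal 0 Var[f; μ].toNNReal) := by
  have heval : MeasurePreserving (fun ω : ℕ → E => ω 0) (Measure.infinitePi fun _ => μ) μ :=
    measurePreserving_eval_infinitePi (fun _ : ℕ => μ) 0
  have hmean : ∫ ω, f (ω 0) ∂(Measure.infinitePi fun _ : ℕ => μ) = μ[f] := by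
    rw [← integral_map heval.aemeasurable hf.aestronglyMeasurable, heval.map_eq]
  have hvar : Var[fun ω : ℕ → E => f (ω 0); Measure.infinitePi fun _ => μ] = Var[f; μ] :=
    heval.variance_fun_comp hf.aemeasurable
  rw [← hmean]
  refine tendstoInDistribution_inv_sqrt_mul_sum_sub (X := fun k (ω : ℕ → E) => f (ω k)) ?_
    (hf2.comp_measurePreserving heval) (iIndepFun_infinitePi fun _ => hf) fun k => ?_
  · exact hvar ▸ HasLaw.id
  · refine IdentDistrib.comp ⟨(measurable_pi_apply k).aemeasurable,
      (measurable_pi_apply 0).aemeasurable, ?_⟩ hf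
    simp only [Measure.infinitePi_map_eval]

lemma infinitePi_map_fin {E : Type*} [MeasurableSpace E] (μ : Measure E)
    [IsProbabilityMeasure μ] (n : ℕ) :
    (Measure.infinitePi fun _ : ℕ => μ).map (fun ω (i : Fin n) => ω i) =
      Measure.pi fun _ => μ := by
  rw [Measure.map_infinitePi_infinitePi_of_inj Fin.val_injective, Measure.infinitePi_eq_pi]

section Prob

variable {α : Type*} [Fintype α]

lemma prob_nonneg {P : α → ℝ} (hP : ∀ x, 0 ≤ P x) (A : Set α) : 0 ≤ prob P A :=
  Finset.sum_nonneg fun x _ => Set.indicator_nonneg (fun x _ => hP x) x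

lemma prob_le_prob_of_pos {P : α → ℝ} (hP : ∀ x, 0 ≤ P x) {A B : Set α}
    (h : ∀ x, 0 < P x → x ∈ A → x ∈ B) : prob P A ≤ prob P B := by
  refine Finset.sum_le_sum fun x _ => Set.indicator_apply_le' (fun hxA => ?_) fun _ =>
    Set.indicator_nonneg (fun x _ => hP x) x
  rcases (hP x).eq_or_lt with hx | hx
  · exact hx ▸ Set.indicator_nonneg (fun x _ => hP x) x
  · rw [Set.indicator_of_mem (h x hx hxA)]

lemma prob_le_one {P : α → ℝ} (hP : P ∈ stdSimplex ℝ α) (A : Set α) : prob P A ≤ 1 :=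
  hP.2 ▸ Finset.sum_le_sum fun x _ => Set.indicator_le_self' (fun x _ => hP.1 x) x

section Mixture

variable {Θ : Type*} [MeasurableSpace Θ] {w : Measure Θ} {P : Θ → α → ℝ}

lemma integrable_prob (hP : ∀ x, Integrable (fun θ => P θ x) w) (A : Set α) :
    Integrable (fun θ => prob (P θ) A) w := by
  classical
  simp only [prob, Set.indicator_apply]
  refine integrable_finsetSum _ fun x _ => ?_
  split_ifs
  exacts [hP x, integrable_zero _ _ _]

lemma prob_integral (hP : ∀ x, Integrable (fun θ => P θ x) w) (A : Set α) :
    prob (fun x => ∫ θ, P θ x ∂w) A = ∫ θ, prob (P θ) A ∂w := by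
  classical
  simp only [prob, Set.indicator_apply]
  rw [integral_finsetSum]
  · refine Finset.sum_congr rfl fun x _ => ?_
    split_ifs <;> simp
  · intro x _
    split_ifs
    exacts [hP x, integrable_zero _ _ _]

end Mixture

lemma prob_measureReal_singleton [MeasurableSpace α] [MeasurableSingletonClass α]
    (μ : Measure α) [IsFiniteMeasure μ] (A : Set α) :
    prob (fun x => μ.real {x}) A = μ.real A := by
  classical
  rw [← A.coe_toFinset, ← sum_measureReal_singleton]
  simp [prob, Set.indicator_apply, Finset.sum_ite]

lemma exists_isProbabilityMeasure_real_singleton_eq [MeasurableSpace α]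
    [MeasurableSingletonClass α] {p : α → ℝ} (hp : p ∈ stdSimplex ℝ α) :
    ∃ μ : Measure α, IsProbabilityMeasure μ ∧ ∀ x, μ.real {x} = p x := by
  have hsum : ∑ x, ENNReal.ofReal (p x) = 1 := by
    rw [← ENNReal.ofReal_sum_of_nonneg fun x _ => hp.1 x, hp.2, ENNReal.ofReal_one]
  refine ⟨(PMF.ofFintype _ hsum).toMeasure, inferInstance, fun x => ?_⟩
  rw [Measure.real, PMF.toMeasure_apply_singleton _ _ (measurableSet_singleton x),
    PMF.ofFintype_apply, ENNReal.toReal_ofReal (hp.1 x)]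

end Prob

/-- The law `pⁿ(x) = ∏ᵢ p(xᵢ)` of `n` letters emitted by a stationary memoryless source with
letter distribution `p`. -/
noncomputable def memoryless {𝒳 : Type*} (p : 𝒳 → ℝ) (n : ℕ) (x : Fin n → 𝒳) : ℝ :=
  ∏ i, p (x i)

section Memoryless

variable {𝒳 : Type*} [Fintype 𝒳]

lemma memoryless_mem_stdSimplex {p : 𝒳 → ℝ} (hp : p ∈ stdSimplex ℝ 𝒳) (n : ℕ) :
    memoryless p n ∈ stdSimplex ℝ (Fin n → 𝒳) := by
  classical
  refine ⟨fun x => Finset.prod_nonneg fun i _ => hp.1 _, ?_⟩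
  simp only [memoryless, ← Fintype.piFinset_univ, ← Finset.prod_univ_sum, hp.2,
    Finset.prod_const_one]

lemma memoryless_eq_prod_pow_card [DecidableEq 𝒳] (p : 𝒳 → ℝ) (n : ℕ) (x : Fin n → 𝒳) :
    memoryless p n x = ∏ a, p a ^ (Finset.univ.filter fun i => x i = a).card := by
  simp only [memoryless, ← Finset.prod_const, Finset.prod_fiberwise']

variable [MeasurableSpace 𝒳] [MeasurableSingletonClass 𝒳]
  (μ : Measure 𝒳) [IsProbabilityMeasure μ]

lemma prob_memoryless_measureReal_singleton (n : ℕ) (A : Set (Fin n → 𝒳)) :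
    prob (memoryless (fun a => μ.real {a}) n) A =
      (Measure.infinitePi fun _ : ℕ => μ).real {ω | (fun i : Fin n => ω i) ∈ A} := by
  have hprod : memoryless (fun a => μ.real {a}) n =
      fun x => (Measure.pi fun _ : Fin n => μ).real {x} := by
    ext x
    simp [memoryless, Measure.real, Measure.pi_singleton, ENNReal.toReal_prod]
  rw [hprod, prob_measureReal_singleton, ← infinitePi_map_fin,
    map_measureReal_apply (by fun_prop) A.toFinite.measurableSet]
  rfl

lemma KL_measureReal_singleton (Q : 𝒳 → ℝ) :
    KL (fun a => μ.real {a}) Q = μ[fun a => Real.log (μ.real {a} / Q a)] := by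
  simp [KL, integral_fintype]

lemma Vdiv_measureReal_singleton (Q : 𝒳 → ℝ) :
    Vdiv (fun a => μ.real {a}) Q = Var[fun a => Real.log (μ.real {a} / Q a); μ] := by
  rw [variance_eq_integral (measurable_of_finite _).aemeasurable, ← KL_measureReal_singleton,
    integral_fintype .of_finite]
  rfl

end Memoryless

/-- The distribution function at `t` of the log-likelihood ratio `log (pⁿ(Xⁿ) / Qⁿ(Xⁿ))`, where
`Xⁿ` has law `pⁿ`. The ratio is written as a sum over the letters. -/
noncomputable def logRatioCDF {𝒳 : Type*} [Fintype 𝒳] (p Q : 𝒳 → ℝ) (n : ℕ) (t : ℝ) : ℝ :=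
  prob (memoryless p n) {x | ∑ i, Real.log (p (x i) / Q (x i)) ≤ t}

section LogRatioCDF

variable {𝒳 : Type*} [Fintype 𝒳] {p : 𝒳 → ℝ}

lemma logRatioCDF_nonneg (hp : p ∈ stdSimplex ℝ 𝒳) (Q : 𝒳 → ℝ) (n : ℕ) (t : ℝ) :
    0 ≤ logRatioCDF p Q n t :=
  prob_nonneg (memoryless_mem_stdSimplex hp n).1 _

lemma logRatioCDF_le_one (hp : p ∈ stdSimplex ℝ 𝒳) (Q : 𝒳 → ℝ) (n : ℕ) (t : ℝ) :
    logRatioCDF p Q n t ≤ 1 :=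
  prob_le_one (memoryless_mem_stdSimplex hp n) _

lemma measurable_logRatioCDF {Θ : Type*} [MeasurableSpace Θ] {P : Θ → 𝒳 → ℝ}
    (hP : ∀ a, Measurable fun θ => P θ a) (Q : 𝒳 → ℝ) (n : ℕ) (t : ℝ) :
    Measurable fun θ => logRatioCDF (P θ) Q n t := by
  classical
  simp only [logRatioCDF, prob, memoryless, Set.indicator_apply, Set.mem_ofPred_eq]
  refine Finset.measurable_fun_sum _ fun x _ =>
    .ite (measurableSet_le (by fun_prop) measurable_const) (by fun_prop) measurable_const

lemma logRatioCDF_measureReal_singleton [MeasurableSpace 𝒳] [MeasurableSingletonClass 𝒳]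
    (μ : Measure 𝒳) [IsProbabilityMeasure μ] (Q : 𝒳 → ℝ) {n : ℕ} (hn : 0 < n) (t : ℝ) :
    logRatioCDF (fun a => μ.real {a}) Q n t = (Measure.infinitePi fun _ : ℕ => μ).real
      {ω | (√n)⁻¹ * (∑ k ∈ Finset.range n, Real.log (μ.real {ω k} / Q (ω k)) -
        n * μ[fun a => Real.log (μ.real {a} / Q a)]) ≤
          (t - n * KL (fun a => μ.real {a}) Q) / √n} := by
  have hsqrt : 0 < √(n : ℝ) := by positivity
  rw [logRatioCDF, prob_memoryless_measureReal_singleton, ← KL_measureReal_singleton]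
  congr 1
  ext ω
  simp only [Set.mem_ofPred_eq, Finset.sum_range]
  rw [← div_eq_inv_mul, div_le_div_iff_of_pos_right hsqrt, sub_le_sub_iff_right]

lemma tendsto_logRatioCDF (hp : p ∈ stdSimplex ℝ 𝒳) {Q : 𝒳 → ℝ} (hV : 0 < Vdiv p Q)
    {t : ℕ → ℝ} {s : ℝ} (ht : Tendsto (fun n => (t n - n * KL p Q) / √n) atTop (𝓝 s)) :
    Tendsto (fun n => logRatioCDF p Q n (t n)) atTop (𝓝 (stdGauss (s / √(Vdiv p Q)))) := by
  let _ : MeasurableSpace 𝒳 := ⊤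
  obtain ⟨μ, _, hμ⟩ := exists_isProbabilityMeasure_real_singleton_eq hp
  obtain rfl : (fun a => μ.real {a}) = p := funext hμ
  have hclt := tendstoInDistribution_sum_infinitePi μ
    (f := fun a => Real.log (μ.real {a} / Q a)) (measurable_of_finite _) .of_discrete
  rw [Vdiv_measureReal_singleton] at hV ⊢
  have hv := (Real.toNNReal_pos.2 hV).ne'
  have := nullSingletonClass_gaussianReal (μ := 0) hv
  have hlim := tendsto_measureReal_le_of_tendstoInDistribution hclt ht (measure_singleton s)
  have hgauss := gaussianReal_real_Iic hv s
  rw [Real.coe_toNNReal _ hV.le] at hgauss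
  refine (hgauss ▸ hlim).congr' ?_
  filter_upwards [eventually_gt_atTop 0] with n hn
  exact (logRatioCDF_measureReal_singleton μ Q hn _).symm

lemma tendsto_logRatioCDF_zero (hp : p ∈ stdSimplex ℝ 𝒳) {Q : 𝒳 → ℝ} {t : ℕ → ℝ}
    (ht : Tendsto (fun n => (t n - n * KL p Q) / √n) atTop atBot) :
    Tendsto (fun n => logRatioCDF p Q n (t n)) atTop (𝓝 0) := by
  let _ : MeasurableSpace 𝒳 := ⊤
  obtain ⟨μ, _, hμ⟩ := exists_isProbabilityMeasure_real_singleton_eq hp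
  obtain rfl : (fun a => μ.real {a}) = p := funext hμ
  have hclt := tendstoInDistribution_sum_infinitePi μ
    (f := fun a => Real.log (μ.real {a} / Q a)) (measurable_of_finite _) .of_discrete
  refine (tendsto_measureReal_le_zero_of_tendstoInDistribution hclt ht).congr' ?_
  filter_upwards [eventually_gt_atTop 0] with n hn
  exact (logRatioCDF_measureReal_singleton μ Q hn _).symm

end LogRatioCDF

section Markov

variable {Θ : Type*} [MeasurableSpace Θ] {w : Measure Θ} [IsFiniteMeasure w] {c : ℝ}

lemma measureReal_mul_integral_lt_le_inv_s10 {g : Θ → ℝ} (hg0 : 0 ≤ g) (hg : Integrable g w)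
    (hc : 0 < c) : w.real {θ | c * ∫ θ', g θ' ∂w < g θ} ≤ c⁻¹ := by
  rcases (integral_nonneg hg0).eq_or_lt with hzero | hpos
  · have hae : g =ᵐ[w] 0 := (integral_eq_zero_iff_of_nonneg hg0 hg).1 hzero.symm
    have hnull : w {θ | c * ∫ θ', g θ' ∂w < g θ} = 0 :=
      measure_mono_null (fun θ (hθ : _ < g θ) => ne_of_gt (by simpa [← hzero] using hθ)) hae
    simpa [Measure.real, hnull] using hc.le
  · have hmarkov := mul_meas_ge_le_integral_of_nonneg (ae_of_all _ hg0) hg (c * ∫ θ, g θ ∂w)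
    rw [mul_right_comm, mul_le_iff_le_one_left hpos, ← le_inv_mul_iff₀ hc, mul_one] at hmarkov
    refine le_trans (measureReal_mono ?_) hmarkov
    exact Set.ofPred_subset_ofPred.2 fun θ => le_of_lt

lemma measureReal_exists_mul_integral_lt_le {κ : Type*} [Fintype κ] {g : κ → Θ → ℝ}
    (hg0 : ∀ k, 0 ≤ g k) (hg : ∀ k, Integrable (g k) w) (hc : 0 < c) :
    w.real {θ | ∃ k, c * ∫ θ', g k θ' ∂w < g k θ} ≤ Fintype.card κ * c⁻¹ := by
  rw [Set.ofPred_exists]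
  calc w.real (⋃ k, {θ | c * ∫ θ', g k θ' ∂w < g k θ})
      ≤ ∑ k, w.real {θ | c * ∫ θ', g k θ' ∂w < g k θ} := measureReal_iUnion_fintype_le _
    _ ≤ ∑ _k : κ, c⁻¹ :=
        Finset.sum_le_sum fun k _ => measureReal_mul_integral_lt_le_inv_s10 (hg0 k) (hg k) hc
    _ = Fintype.card κ * c⁻¹ := by simp

end Markov

lemma integral_le_measureReal_add_setIntegral_compl {Θ : Type*} [MeasurableSpace Θ]
    {w : Measure Θ} [IsFiniteMeasure w] {f F : Θ → ℝ} (hf : Integrable f w) (hf1 : ∀ θ, f θ ≤ 1)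
    (hF : Integrable F w) (hF0 : 0 ≤ F) {E L : Set Θ} (hE : MeasurableSet E)
    (hL : MeasurableSet L) (hle : ∀ θ, θ ∉ E → f θ ≤ F θ) :
    ∫ θ, f θ ∂w ≤ w.real E + w.real L + ∫ θ in Lᶜ, F θ ∂w := by
  have hbad : ∫ θ in E ∪ L, f θ ∂w ≤ w.real (E ∪ L) := by
    simpa using integral_mono hf.integrableOn (integrable_const 1) hf1
  have hgood : ∫ θ in (E ∪ L)ᶜ, f θ ∂w ≤ ∫ θ in Lᶜ, F θ ∂w :=
    calc ∫ θ in (E ∪ L)ᶜ, f θ ∂w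
        ≤ ∫ θ in (E ∪ L)ᶜ, F θ ∂w :=
          setIntegral_mono_on hf.integrableOn hF.integrableOn (hE.union hL).compl
            fun θ hθ => hle θ fun hθE => hθ (.inl hθE)
      _ ≤ ∫ θ in Lᶜ, F θ ∂w :=
          setIntegral_mono_set hF.integrableOn (ae_of_all _ hF0)
            (Set.compl_subset_compl.2 Set.subset_union_right).eventuallyLE
  rw [← integral_add_compl (hE.union hL) hf]
  exact add_le_add (hbad.trans (measureReal_union_le E L)) hgood

/-- The law `∫ P_θⁿ(x) dw(θ)` of `n` letters emitted by the mixed memoryless source with mixing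
measure `w` and components `P_θ`. -/
noncomputable def mixedSource {𝒳 Θ : Type*} [MeasurableSpace Θ] (w : Measure Θ)
    (P : Θ → 𝒳 → ℝ) (n : ℕ) (x : Fin n → 𝒳) : ℝ :=
  ∫ θ, memoryless (P θ) n x ∂w

/-- The components giving some word of length `n` more than `c` times its probability under the
mixture. They are discarded, since off this set the likelihood of a component is controlled by
that of the mixture. -/
def expurgatedSet {𝒳 Θ : Type*} [MeasurableSpace Θ] (w : Measure Θ) (P : Θ → 𝒳 → ℝ) (n : ℕ)
    (c : ℝ) : Set Θ :=
  {θ | ∃ x, c * mixedSource w P n x < memoryless (P θ) n x}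

lemma measurableSet_expurgatedSet {𝒳 Θ : Type*} [Finite 𝒳] [MeasurableSpace Θ] {w : Measure Θ}
    {P : Θ → 𝒳 → ℝ} (hmeas : ∀ a, Measurable fun θ => P θ a) (n : ℕ) (c : ℝ) :
    MeasurableSet (expurgatedSet w P n c) := by
  rw [expurgatedSet, Set.ofPred_exists]
  refine .iUnion fun x => measurableSet_lt measurable_const ?_
  simp only [memoryless]
  fun_prop

section MixedSource

variable {𝒳 Θ : Type*} [Fintype 𝒳] [MeasurableSpace Θ] {w : Measure Θ} {P : Θ → 𝒳 → ℝ}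
  {Q : 𝒳 → ℝ} {n : ℕ}

lemma prob_memoryless_logRatio_le_of_notMem_expurgatedSet {θ : Θ} (hP : ∀ a, 0 ≤ P θ a)
    (hQ : ∀ a, 0 < Q a) {T : ℝ} (hθ : θ ∉ expurgatedSet w P n (Real.exp T)) (u : ℝ) :
    prob (memoryless (P θ) n) {x | Real.log (mixedSource w P n x / memoryless Q n x) ≤ u} ≤
      logRatioCDF (P θ) Q n (u + T) := by
  refine prob_le_prob_of_pos (fun x => Finset.prod_nonneg fun i _ => hP _) fun x hx hxu => ?_
  have hle : memoryless (P θ) n x ≤ Real.exp T * mixedSource w P n x :=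
    not_lt.1 fun h => hθ ⟨x, h⟩
  have hmix : 0 < mixedSource w P n x := pos_of_mul_pos_right (hx.trans_le hle) (Real.exp_nonneg T)
  have hQx : 0 < memoryless Q n x := Finset.prod_pos fun i _ => hQ _
  have hPx (i : Fin n) : P θ (x i) ≠ 0 := Finset.prod_ne_zero_iff.1 hx.ne' i (Finset.mem_univ i)
  calc ∑ i, Real.log (P θ (x i) / Q (x i))
      = Real.log (memoryless (P θ) n x / memoryless Q n x) := by
        rw [← Real.log_prod fun i _ => div_ne_zero (hPx i) (hQ _).ne', Finset.prod_div_distrib]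
        rfl
    _ ≤ Real.log (mixedSource w P n x / memoryless Q n x * Real.exp T) := by
        refine Real.log_le_log (div_pos hx hQx) ?_
        rw [div_mul_eq_mul_div, mul_comm]
        gcongr
    _ = Real.log (mixedSource w P n x / memoryless Q n x) + T := by
        rw [Real.log_mul (div_pos hmix hQx).ne' (Real.exp_ne_zero T), Real.log_exp]
    _ ≤ u + T := add_le_add_left hxu T

variable [IsFiniteMeasure w]

lemma integrable_prod_pow (hmeas : ∀ a, Measurable fun θ => P θ a)
    (hdist : ∀ θ, P θ ∈ stdSimplex ℝ 𝒳) (k : 𝒳 → ℕ) :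
    Integrable (fun θ => ∏ a, P θ a ^ k a) w := by
  have hpow (θ : Θ) (a : 𝒳) : P θ a ^ k a ∈ Set.Icc (0 : ℝ) 1 :=
    ⟨pow_nonneg ((hdist θ).1 a) _,
      pow_le_one₀ ((hdist θ).1 a) (mem_Icc_of_mem_stdSimplex (hdist θ) a).2⟩
  refine .of_mem_Icc 0 1 (by fun_prop) (ae_of_all _ fun θ => ⟨?_, ?_⟩)
  · exact Finset.prod_nonneg fun a _ => (hpow θ a).1
  · exact Finset.prod_le_one (fun a _ => (hpow θ a).1) fun a _ => (hpow θ a).2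

lemma integrable_memoryless (hmeas : ∀ a, Measurable fun θ => P θ a)
    (hdist : ∀ θ, P θ ∈ stdSimplex ℝ 𝒳) (x : Fin n → 𝒳) :
    Integrable (fun θ => memoryless (P θ) n x) w := by
  classical
  simp only [memoryless_eq_prod_pow_card]
  exact integrable_prod_pow hmeas hdist _

-- The likelihood of a word depends only on its type, so a union bound over the at most
-- `(n + 1) ^ |𝒳|` types replaces one over the exponentially many words.
lemma measureReal_expurgatedSet_le (hmeas : ∀ a, Measurable fun θ => P θ a)
    (hdist : ∀ θ, P θ ∈ stdSimplex ℝ 𝒳) {c : ℝ} (hc : 0 < c) :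
    w.real (expurgatedSet w P n c) ≤ (n + 1) ^ Fintype.card 𝒳 * c⁻¹ := by
  classical
  let likelihood (k : 𝒳 → Fin (n + 1)) (θ : Θ) : ℝ := ∏ a, P θ a ^ (k a : ℕ)
  have hsub : expurgatedSet w P n c ⊆
      {θ | ∃ k, c * ∫ θ', likelihood k θ' ∂w < likelihood k θ} := by
    rintro θ ⟨x, hx⟩
    refine ⟨fun a => ⟨(Finset.univ.filter fun i => x i = a).card, ?_⟩, ?_⟩
    · exact Nat.lt_succ_of_le ((Finset.card_le_univ _).trans_eq (Fintype.card_fin n))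
    · simpa only [mixedSource, memoryless_eq_prod_pow_card] using hx
  calc w.real (expurgatedSet w P n c)
      ≤ w.real {θ | ∃ k, c * ∫ θ', likelihood k θ' ∂w < likelihood k θ} := measureReal_mono hsub
    _ ≤ Fintype.card (𝒳 → Fin (n + 1)) * c⁻¹ :=
        measureReal_exists_mul_integral_lt_le
          (fun k θ => Finset.prod_nonneg fun a _ => pow_nonneg ((hdist θ).1 a) _)
          (fun k => integrable_prod_pow hmeas hdist _) hc
    _ = (n + 1) ^ Fintype.card 𝒳 * c⁻¹ := by simp

lemma integrable_logRatioCDF (hmeas : ∀ a, Measurable fun θ => P θ a)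
    (hdist : ∀ θ, P θ ∈ stdSimplex ℝ 𝒳) (t : ℝ) :
    Integrable (fun θ => logRatioCDF (P θ) Q n t) w :=
  .of_mem_Icc 0 1 (measurable_logRatioCDF hmeas Q n t).aemeasurable
    (ae_of_all _ fun θ => ⟨logRatioCDF_nonneg (hdist θ) Q n t, logRatioCDF_le_one (hdist θ) Q n t⟩)

lemma prob_mixedSource_logRatio_le (hmeas : ∀ a, Measurable fun θ => P θ a)
    (hdist : ∀ θ, P θ ∈ stdSimplex ℝ 𝒳) (hQ : ∀ a, 0 < Q a) (u T : ℝ) {L : Set Θ}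
    (hL : MeasurableSet L) :
    prob (mixedSource w P n) {x | Real.log (mixedSource w P n x / memoryless Q n x) ≤ u} ≤
      (n + 1) ^ Fintype.card 𝒳 * Real.exp (-T) + w.real L +
        ∫ θ in Lᶜ, logRatioCDF (P θ) Q n (u + T) ∂w := by
  have hintegrable := integrable_memoryless (w := w) (n := n) hmeas hdist
  have hexpurgated : w.real (expurgatedSet w P n (Real.exp T)) ≤
      (n + 1) ^ Fintype.card 𝒳 * Real.exp (-T) :=
    Real.exp_neg T ▸ measureReal_expurgatedSet_le hmeas hdist (Real.exp_pos T)
  refine (prob_integral hintegrable _).trans_le ((integral_le_measureReal_add_setIntegral_compl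
    (integrable_prob hintegrable _) (fun θ => prob_le_one (memoryless_mem_stdSimplex (hdist θ) n) _)
    (integrable_logRatioCDF hmeas hdist (u + T)) (fun θ => logRatioCDF_nonneg (hdist θ) Q n _)
    (measurableSet_expurgatedSet hmeas n _) hL fun θ hθ =>
      prob_memoryless_logRatio_le_of_notMem_expurgatedSet (hdist θ).1 hQ hθ u).trans ?_)
  gcongr

end MixedSource

lemma tendsto_sqrt_sqrt_natCast : Tendsto (fun n : ℕ => √√(n : ℝ)) atTop atTop :=
  Real.tendsto_sqrt_atTop.comp (Real.tendsto_sqrt_atTop.comp tendsto_natCast_atTop_atTop)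

lemma tendsto_add_one_pow_mul_exp_neg_sqrt_sqrt (K : ℕ) :
    Tendsto (fun n : ℕ => ((n : ℝ) + 1) ^ K * Real.exp (-√√n)) atTop (𝓝 0) := by
  have hdom : Tendsto (fun n : ℕ => 2 ^ K * (√√(n : ℝ) ^ (4 * K) * Real.exp (-√√n))) atTop
      (𝓝 0) := by
    simpa only [mul_zero, Function.comp_def] using
      ((Real.tendsto_pow_mul_exp_neg_atTop_nhds_zero (4 * K)).comp
        tendsto_sqrt_sqrt_natCast).const_mul (2 ^ K)
  refine squeeze_zero' (.of_forall fun n => by positivity) ?_ hdom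
  filter_upwards [eventually_ge_atTop 1] with n hn
  have hn1 : (1 : ℝ) ≤ n := by exact_mod_cast hn
  have hfourth : √√(n : ℝ) ^ 4 = n := by
    rw [show (4 : ℕ) = 2 * 2 from rfl, pow_mul, Real.sq_sqrt (Real.sqrt_nonneg _),
      Real.sq_sqrt n.cast_nonneg]
  rw [pow_mul, hfourth, ← mul_assoc, ← mul_pow]
  gcongr
  linarith

lemma tendsto_threshold_sub_div_sqrt (R S : ℝ) :
    Tendsto (fun n : ℕ => (n * (R + S / √n) + √√n - n * R) / √n) atTop (𝓝 S) := by
  have hlim : Tendsto (fun n : ℕ => S + (√√(n : ℝ))⁻¹) atTop (𝓝 S) := by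
    simpa only [add_zero, Function.comp_apply] using
      (tendsto_inv_atTop_zero.comp tendsto_sqrt_sqrt_natCast).const_add S
  refine hlim.congr' ?_
  filter_upwards [eventually_gt_atTop 0] with n hn
  have hsqrt : √(n : ℝ) ≠ 0 := by positivity
  calc S + (√√(n : ℝ))⁻¹
      = n / √n / √n * S + √√n / √n := by
        rw [Real.div_sqrt, div_self hsqrt, one_mul, Real.sqrt_div_self', one_div]
    _ = (n * (R + S / √n) + √√n - n * R) / √n := by ring

lemma tendsto_sub_mul_div_sqrt_atBot {t : ℕ → ℝ} {R S D : ℝ}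
    (ht : Tendsto (fun n => (t n - n * R) / √n) atTop (𝓝 S)) (hRD : R < D) :
    Tendsto (fun n => (t n - n * D) / √n) atTop atBot := by
  have hsqrt : Tendsto (fun n : ℕ => √(n : ℝ)) atTop atTop :=
    Real.tendsto_sqrt_atTop.comp tendsto_natCast_atTop_atTop
  refine (ht.add_atBot (hsqrt.atTop_mul_const_of_neg (sub_neg.2 hRD))).congr fun n => ?_
  calc (t n - n * R) / √n + √n * (R - D)
      = (t n - n * R) / √n + n / √n * (R - D) := by rw [Real.div_sqrt]
    _ = (t n - n * D) / √n := by ring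

section DominatedConvergence

variable {𝒳 Θ : Type*} [Fintype 𝒳] [MeasurableSpace Θ] {P : Θ → 𝒳 → ℝ}

lemma measurable_KL (hmeas : ∀ a, Measurable fun θ => P θ a) (Q : 𝒳 → ℝ) :
    Measurable fun θ => KL (P θ) Q := by
  simp only [KL]
  fun_prop

lemma tendsto_setIntegral_logRatioCDF {w : Measure Θ} [IsFiniteMeasure w]
    (hmeas : ∀ a, Measurable fun θ => P θ a) (hdist : ∀ θ, P θ ∈ stdSimplex ℝ 𝒳) {Q : 𝒳 → ℝ}
    {R S : ℝ} (hV : ∀ᵐ θ ∂w, KL (P θ) Q = R → 0 < Vdiv (P θ) Q)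
    {t : ℕ → ℝ} (ht : Tendsto (fun n => (t n - n * R) / √n) atTop (𝓝 S)) :
    Tendsto (fun n => ∫ θ in {θ | R ≤ KL (P θ) Q}, logRatioCDF (P θ) Q n (t n) ∂w) atTop
      (𝓝 (∫ θ in {θ | KL (P θ) Q = R}, stdGauss (S / √(Vdiv (P θ) Q)) ∂w)) := by
  have hKL := measurable_KL hmeas Q
  have hge : MeasurableSet {θ | R ≤ KL (P θ) Q} := measurableSet_le measurable_const hKL
  have heq : MeasurableSet {θ | KL (P θ) Q = R} := measurableSet_eq_fun hKL measurable_const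
  have hinter : {θ | R ≤ KL (P θ) Q} ∩ {θ | KL (P θ) Q = R} = {θ | KL (P θ) Q = R} :=
    Set.inter_eq_right.2 fun θ hθ => ge_of_eq hθ
  rw [← hinter, ← setIntegral_indicator heq]
  refine tendsto_integral_of_dominated_convergence 1
    (fun n => (measurable_logRatioCDF hmeas Q n _).aestronglyMeasurable) (integrable_const 1)
    (fun n => ae_of_all _ fun θ => ?_) ?_
  · rw [Real.norm_of_nonneg (logRatioCDF_nonneg (hdist θ) Q n _)]
    exact logRatioCDF_le_one (hdist θ) Q n _
  · filter_upwards [ae_restrict_mem hge, ae_restrict_of_ae hV] with θ hθ hVθ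
    rcases eq_or_lt_of_le (show R ≤ KL (P θ) Q from hθ) with heqR | hlt
    · rw [Set.indicator_of_mem (show θ ∈ {θ | KL (P θ) Q = R} from heqR.symm)]
      exact tendsto_logRatioCDF (hdist θ) (hVθ heqR.symm) (heqR ▸ ht)
    · rw [Set.indicator_of_notMem (show θ ∉ {θ | KL (P θ) Q = R} from hlt.ne')]
      exact tendsto_logRatioCDF_zero (hdist θ) (tendsto_sub_mul_div_sqrt_atBot ht hlt)

end DominatedConvergence

theorem stmt_10_general {𝒳 Θ : Type*} [Fintype 𝒳] [MeasurableSpace Θ]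
    (w : Measure Θ) [IsFiniteMeasure w]
    (P : Θ → 𝒳 → ℝ)
    (hmeas : ∀ x, Measurable fun θ => P θ x)
    (hdist : ∀ θ, P θ ∈ stdSimplex ℝ 𝒳)
    (Q : 𝒳 → ℝ) (hQ : ∀ x, 0 < Q x)
    (R S : ℝ) (hV : ∀ᵐ θ ∂w, KL (P θ) Q = R → 0 < Vdiv (P θ) Q) :
    limsup (fun n : ℕ =>
      prob (mixedSource w P n)
        {x | 1 / n * Real.log (mixedSource w P n x / memoryless Q n x) ≤ R + S / √n}) atTop ≤
    w.real {θ | KL (P θ) Q < R} +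
      ∫ θ in {θ | KL (P θ) Q = R}, stdGauss (S / √(Vdiv (P θ) Q)) ∂w := by
  have hlt : MeasurableSet {θ | KL (P θ) Q < R} :=
    measurableSet_lt (measurable_KL hmeas Q) measurable_const
  have hbound := ((tendsto_add_one_pow_mul_exp_neg_sqrt_sqrt (Fintype.card 𝒳)).add_const
    (w.real {θ | KL (P θ) Q < R})).add
      (tendsto_setIntegral_logRatioCDF hmeas hdist hV (tendsto_threshold_sub_div_sqrt R S))
  rw [zero_add] at hbound
  rw [← hbound.limsup_eq]
  refine limsup_le_limsup ?_ ?_ hbound.isBoundedUnder_le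
  · filter_upwards [eventually_gt_atTop 0] with n hn
    have hn0 : (0 : ℝ) < n := by exact_mod_cast hn
    simp only [one_div, inv_mul_le_iff₀ hn0]
    simpa only [Set.compl_ofPred, not_lt] using
      prob_mixedSource_logRatio_le (w := w) hmeas hdist hQ (n * (R + S / √n)) (√√n) hlt
  · exact (isBoundedUnder_of ⟨0, fun n => prob_nonneg (fun x => integral_nonneg fun θ =>
      (memoryless_mem_stdSimplex (hdist θ) n).1 x) _⟩).isCoboundedUnder_le

/-- Inequality (15): the limsup of the mixed-source probability of the event
`(1/n) log (P_{X^n}(X^n)/P_{X̄^n}(X^n)) ≤ R + S/√n` is at most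
`w({θ : D_θ < R}) + ∫_{{θ : D_θ = R}} Φ_θ(S) dw(θ)`. -/
theorem stmt_10 {𝒳 Θ : Type*} [Fintype 𝒳] [MeasurableSpace Θ]
    (w : Measure Θ) [IsProbabilityMeasure w]
    (P : Θ → 𝒳 → ℝ)
    (hmeas : ∀ x : 𝒳, Measurable fun θ => P θ x)
    (hdist : ∀ θ, (∀ x, 0 ≤ P θ x) ∧ (∑ x, P θ x) = 1)
    (Q : 𝒳 → ℝ) (hQ0 : ∀ x, 0 < Q x) (hQ1 : ∑ x, Q x = 1)
    (hV : ∀ θ, 0 < Vdiv (P θ) Q)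
    (R S : ℝ) :
    Filter.limsup (fun n : ℕ =>
      prob (fun x : Fin n → 𝒳 => ∫ θ, (∏ i, P θ (x i)) ∂w)
        {x | (1 / (n : ℝ)) * Real.log
          ((∫ θ, (∏ i, P θ (x i)) ∂w) / ∏ i, Q (x i)) ≤ R + S / Real.sqrt (n : ℝ)})
      Filter.atTop ≤
    (w {θ | KL (P θ) Q < R}).toReal +
      ∫ θ in {θ | KL (P θ) Q = R}, stdGauss (S / Real.sqrt (Vdiv (P θ) Q)) ∂w := by
  exact stmt_10_general w P hmeas hdist Q hQ0 R S (ae_of_all _ fun θ _ => hV θ)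
end
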